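/- There exists a universal constant c > 0 such that for every ε ∈ (0,1) and all integers n, d with 1 ≤ d ≤ n/2, there is a DAG G on n nodes with every in-degree at most d (namely the complete bipartite DAG with d source nodes each pointing to all n − d sink nodes) with the following property. Any estimator — a measurable map taking m i.i.d. samples from a Gaussian Bayesian network P on G to a Gaussian Bayesian network Q on G — that satisfies, for every Gaussian Bayesian network P on G, Pr( d_TV(P, Q) ≤ c·ε ) ≥ 2/3, must use at least m ≥ c·d(n−d)/ε² samples; in particular Ω(nd/ε²) samples are needed. -/

import Mathlib

open MeasureTheory ProbabilityTheory Matrix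

/-- Total variation distance between two measures:
`d_TV(P,Q) = sup_A |P(A) − Q(A)|`. -/
noncomputable def dTV {α : Type*} [MeasurableSpace α] (P Q : Measure α) : ℝ :=
  ⨆ s : Set α, |(P s).toReal - (Q s).toReal|

/-- The Gaussian Bayesian network with coefficient matrix `B` and noise standard
deviations `σ`: the pushforward of the product Gaussian `⊗ᵢ N(0, σᵢ²)` under the
linear map `η ↦ (I − B)⁻¹ η`. -/
noncomputable def gaussianBN {n : ℕ} (B : Matrix (Fin n) (Fin n) ℝ) (σ : Fin n → ℝ) :
    Measure (Fin n → ℝ) :=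
  Measure.map (fun η => (1 - B)⁻¹.mulVec η)
    (Measure.pi fun i => gaussianReal 0 ((σ i ^ 2).toNNReal))

/-!
Assouad's method on the complete bipartite DAG. The coefficient matrices with entries in `{0, a}` on
the `N = d (n - d)` edges, where `a ≍ ε / √N`, form a cube. They have square zero, so the network
with matrix `B` and unit noise is the standard Gaussian sheared by `1 + B`.

Changing one coefficient by `b` shifts one coordinate by `b` times another one, and by the
Cameron–Martin formula the `χ²`-divergence of `m` samples is at most `exp (2 b² m) - 1`. Below
`m ≍ N / ε²` neighbouring vertices are therefore hard to tell apart, and every estimator of the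
vertex errs on a constant fraction of the edges. Conversely, for `D = C - B` of Frobenius norm at
most one, the set `{x | 0 < D z ⬝ z}` with `z = (1 - B) x` witnesses that the laws of `B` and `C`
are at total variation distance at least a constant times `‖D‖`: its two probabilities differ by
that of `-|D z|² < D z ⬝ z ≤ 0` for standard Gaussian `z`, and given the sources `D z ⬝ z` is
Gaussian with variance `|D z|²`. So an `O(ε)`-accurate estimate of the law would determine all but
a small fraction of the edges.
-/

section TotalVariation

variable {α : Type*} [MeasurableSpace α]

lemma sq_integral_abs_le_integral_sq {μ : Measure α} [IsProbabilityMeasure μ] {f : α → ℝ}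
    (hf : MemLp f 2 μ) : (∫ x, |f x| ∂μ) ^ 2 ≤ ∫ x, f x ^ 2 ∂μ := by
  have hvar := variance_eq_sub hf.abs
  have hnonneg := variance_nonneg |f| μ
  simp only [Pi.pow_apply, Pi.abs_apply, sq_abs] at hvar
  exact sub_nonneg.1 (hvar ▸ hnonneg)

/-- Total variation is dominated by the square root of the `χ²`-divergence, which is the variance
of the likelihood ratio. -/
lemma abs_measureReal_sub_withDensity_le {μ : Measure α} [IsProbabilityMeasure μ] {l : α → ℝ}
    (hl : MemLp l 2 μ) (hl_nonneg : 0 ≤ l) (hl_one : ∫ x, l x ∂μ = 1) (A : Set α) :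
    |μ.real A - (μ.withDensity fun x => ENNReal.ofReal (l x)).real A|
      ≤ √((∫ x, l x ^ 2 ∂μ) - 1) := by
  have hl_int : Integrable l μ := hl.integrable one_le_two
  have hdiff_int : Integrable (fun x => 1 - l x) μ := (integrable_const 1).sub hl_int
  have hdensity : (μ.withDensity fun x => ENNReal.ofReal (l x)).real A = ∫ x in A, l x ∂μ := by
    rw [measureReal_def, withDensity_apply',
      integral_eq_lintegral_of_nonneg_ae (ae_of_all _ hl_nonneg)
        hl_int.aestronglyMeasurable.restrict]
  have hsq : ∫ x, (1 - l x) ^ 2 ∂μ = ∫ x, l x ^ 2 ∂μ - 1 := by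
    have hexpand : ∀ x, (1 - l x) ^ 2 = l x ^ 2 - 2 * l x + 1 := fun x => by ring
    have hsub_int : Integrable (fun x => l x ^ 2 - 2 * l x) μ :=
      hl.integrable_sq.sub (hl_int.const_mul 2)
    simp_rw [hexpand]
    rw [integral_add hsub_int (integrable_const 1),
      integral_sub hl.integrable_sq (hl_int.const_mul 2), integral_const_mul, hl_one]
    simp only [integral_const, probReal_univ, smul_eq_mul]
    ring
  calc |μ.real A - (μ.withDensity fun x => ENNReal.ofReal (l x)).real A|
      = |∫ x in A, (1 - l x) ∂μ| := by
        rw [hdensity, integral_sub (integrable_const 1) hl_int.integrableOn]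
        simp
    _ ≤ ∫ x in A, |1 - l x| ∂μ := abs_integral_le_integral_abs
    _ ≤ ∫ x, |1 - l x| ∂μ :=
        setIntegral_le_integral hdiff_int.abs (ae_of_all _ fun _ => abs_nonneg _)
    _ ≤ √(∫ x, (1 - l x) ^ 2 ∂μ) :=
        Real.le_sqrt_of_sq_le (sq_integral_abs_le_integral_sq ((memLp_const 1).sub hl))
    _ = √((∫ x, l x ^ 2 ∂μ) - 1) := by rw [hsq]

lemma pi_withDensity_ofReal {ι : Type*} [Fintype ι] {X : ι → Type*} [∀ i, MeasurableSpace (X i)]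
    {μ : ∀ i, Measure (X i)} [∀ i, SigmaFinite (μ i)] {l : ∀ i, X i → ℝ}
    (hl : ∀ i, Integrable (l i) (μ i)) (hl_nonneg : ∀ i, 0 ≤ l i) :
    Measure.pi (fun i => (μ i).withDensity fun x => ENNReal.ofReal (l i x))
      = (Measure.pi μ).withDensity fun x => ENNReal.ofReal (∏ i, l i (x i)) := by
  have := fun i => isFiniteMeasure_withDensity_ofReal (hl i).2
  refine Measure.pi_eq fun s hs => ?_
  have hprod_nonneg : ∀ x : ∀ i, X i, 0 ≤ ∏ i, l i (x i) := fun x =>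
    Finset.prod_nonneg fun i _ => hl_nonneg i (x i)
  rw [withDensity_apply _ (.univ_pi hs), Measure.restrict_pi_pi,
    ← ofReal_integral_eq_lintegral_ofReal
      (Integrable.fintype_prod_dep fun i => (hl i).restrict) (ae_of_all _ hprod_nonneg),
    integral_fintype_prod_eq_prod,
    ENNReal.ofReal_prod_of_nonneg fun i _ => integral_nonneg (hl_nonneg i)]
  refine Finset.prod_congr rfl fun i _ => ?_
  rw [withDensity_apply _ (hs i),
    ofReal_integral_eq_lintegral_ofReal (hl i).restrict (ae_of_all _ (hl_nonneg i))]

lemma abs_pi_real_sub_pi_withDensity_real_le {μ : Measure α} [IsProbabilityMeasure μ] {l : α → ℝ}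
    (hl : MemLp l 2 μ) (hl_nonneg : 0 ≤ l) (hl_one : ∫ x, l x ∂μ = 1) {ι : Type*} [Fintype ι]
    (A : Set (ι → α)) :
    |(Measure.pi fun _ : ι => μ).real A
        - (Measure.pi fun _ : ι => μ.withDensity fun x => ENNReal.ofReal (l x)).real A|
      ≤ √((∫ x, l x ^ 2 ∂μ) ^ Fintype.card ι - 1) := by
  have hl_int : Integrable l μ := hl.integrable one_le_two
  have hprod_int : Integrable (fun x : ι → α => ∏ i, l (x i)) (Measure.pi fun _ => μ) :=
    Integrable.fintype_prod fun _ => hl_int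
  have hprod_sq : ∀ x : ι → α, (∏ i, l (x i)) ^ 2 = ∏ i, l (x i) ^ 2 := fun x =>
    (Finset.prod_pow _ _ _).symm
  have hprod_memLp : MemLp (fun x : ι → α => ∏ i, l (x i)) 2 (Measure.pi fun _ => μ) := by
    rw [memLp_two_iff_integrable_sq hprod_int.aestronglyMeasurable]
    simp_rw [hprod_sq]
    exact Integrable.fintype_prod fun _ => hl.integrable_sq
  have hprod_one : ∫ x : ι → α, ∏ i, l (x i) ∂(Measure.pi fun _ => μ) = 1 := by
    rw [integral_fintype_prod_eq_pow, hl_one, one_pow]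
  have hbound := abs_measureReal_sub_withDensity_le hprod_memLp
    (fun x => Finset.prod_nonneg fun i _ => hl_nonneg (x i)) hprod_one A
  simp_rw [hprod_sq] at hbound
  rwa [integral_fintype_prod_eq_pow (fun x => l x ^ 2),
    ← pi_withDensity_ofReal (fun _ => hl_int) (fun _ => hl_nonneg)] at hbound

lemma abs_pi_map_real_sub_le {β ι : Type*} [MeasurableSpace β] [Fintype ι]
    {μ ν : Measure α} [IsProbabilityMeasure μ] [IsProbabilityMeasure ν] {t : ℝ}
    (hμν : ∀ A : Set (ι → α), MeasurableSet A →
      |(Measure.pi fun _ => μ).real A - (Measure.pi fun _ => ν).real A| ≤ t)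
    {φ : α → β} (hφ : Measurable φ) {A : Set (ι → β)} (hA : MeasurableSet A) :
    |(Measure.pi fun _ => μ.map φ).real A - (Measure.pi fun _ => ν.map φ).real A| ≤ t := by
  have := Measure.isProbabilityMeasure_map (μ := μ) hφ.aemeasurable
  have := Measure.isProbabilityMeasure_map (μ := ν) hφ.aemeasurable
  have hφ_pi : Measurable fun (x : ι → α) i => φ (x i) := by fun_prop
  rw [← Measure.pi_map_pi fun _ => hφ.aemeasurable, ← Measure.pi_map_pi fun _ => hφ.aemeasurable,
    map_measureReal_apply hφ_pi hA, map_measureReal_apply hφ_pi hA]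
  exact hμν _ (hφ_pi hA)

lemma abs_measureReal_sub_le_dTV (P Q : Measure α) [IsProbabilityMeasure P]
    [IsProbabilityMeasure Q] (s : Set α) : |P.real s - Q.real s| ≤ dTV P Q := by
  refine le_ciSup (f := fun s => |P.real s - Q.real s|) ⟨1, ?_⟩ s
  rintro _ ⟨s, rfl⟩
  rw [abs_sub_le_iff]
  constructor <;>
    linarith [measureReal_nonneg (μ := P) (s := s), measureReal_le_one (μ := P) (s := s),
      measureReal_nonneg (μ := Q) (s := s), measureReal_le_one (μ := Q) (s := s)]

end TotalVariation

section CoordShift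

variable {ι : Type*} {i : ι} {g : (ι → ℝ) → ℝ}

/-- The translation of the `i`-th coordinate of `η` by `g η`. It is a shear when `g` does not
depend on that coordinate. -/
def coordShift [DecidableEq ι] (i : ι) (g : (ι → ℝ) → ℝ) (η : ι → ℝ) : ι → ℝ :=
  Function.update η i (η i + g η)

/-- The Cameron–Martin density of the image of the standard Gaussian under `coordShift i g`. -/
noncomputable def shiftDensity (i : ι) (g : (ι → ℝ) → ℝ) (η : ι → ℝ) : ℝ :=
  Real.exp (g η * η i - g η ^ 2 / 2)

lemma shiftDensity_nonneg (i : ι) (g : (ι → ℝ) → ℝ) : 0 ≤ shiftDensity i g :=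
  fun _ => (Real.exp_pos _).le

lemma measurable_coordShift [DecidableEq ι] (hg : Measurable g) : Measurable (coordShift i g) := by
  refine measurable_pi_iff.2 fun k => ?_
  obtain rfl | hk := eq_or_ne k i
  · simp only [coordShift, Function.update_self]
    fun_prop
  · simp only [coordShift, Function.update_of_ne hk]
    fun_prop

lemma measurable_shiftDensity (hg : Measurable g) : Measurable (shiftDensity i g) := by
  unfold shiftDensity
  fun_prop

lemma shiftDensity_sq (i : ι) (g : (ι → ℝ) → ℝ) (η : ι → ℝ) :
    shiftDensity i g η ^ 2 = shiftDensity i (fun η => 2 * g η) η * Real.exp (g η ^ 2) := by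
  rw [shiftDensity, shiftDensity, ← Real.exp_nat_mul, ← Real.exp_add]
  push_cast
  ring_nf

end CoordShift

section StdGaussian

variable {ι : Type*} [Fintype ι]

/-- The law of a vector of independent standard Gaussians indexed by `ι`. It lives on `ι → ℝ`, as
`gaussianBN` does, rather than on `EuclideanSpace ℝ ι` as Mathlib's `stdGaussian` does. -/
noncomputable abbrev stdGaussianPi (ι : Type*) [Fintype ι] : Measure (ι → ℝ) :=
  Measure.pi fun _ => gaussianReal 0 1

lemma map_dotProduct_stdGaussianPi (w : ι → ℝ) :
    (stdGaussianPi ι).map (fun η => w ⬝ᵥ η) = gaussianReal 0 (w ⬝ᵥ w).toNNReal := by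
  let L : StrongDual ℝ (EuclideanSpace ℝ ι) := innerSL ℝ (WithLp.toLp 2 w)
  have hL : (fun η : ι → ℝ => w ⬝ᵥ η) = L ∘ WithLp.toLp 2 := by
    funext η
    simp [L, PiLp.inner_apply, dotProduct, mul_comm]
  have hnorm : ‖L‖ ^ 2 = w ⬝ᵥ w := by
    rw [innerSL_apply_norm, EuclideanSpace.real_norm_sq_eq]
    simp only [dotProduct, sq]
  rw [hL, ← Measure.map_map (by fun_prop) (by fun_prop), map_pi_eq_stdGaussian,
    IsGaussian.map_eq_gaussianReal, integral_strongDual_stdGaussian, variance_dual_stdGaussian,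
    hnorm]

lemma lintegral_add_const_gaussianReal (b : ℝ) {F : ℝ → ENNReal} (hF : Measurable F) :
    ∫⁻ x, F (x + b) ∂(gaussianReal 0 1)
      = ∫⁻ x, ENNReal.ofReal (Real.exp (b * x - b ^ 2 / 2)) * F x ∂(gaussianReal 0 1) := by
  have hdensity (x : ℝ) :
      gaussianPDF b 1 x = gaussianPDF 0 1 x * ENNReal.ofReal (Real.exp (b * x - b ^ 2 / 2)) := by
    rw [gaussianPDF, gaussianPDF, ← ENNReal.ofReal_mul (gaussianPDFReal_nonneg _ _ _)]
    simp only [gaussianPDFReal, NNReal.coe_one, mul_one, mul_assoc, ← Real.exp_add]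
    ring_nf
  calc ∫⁻ x, F (x + b) ∂(gaussianReal 0 1)
      = ∫⁻ x, F x ∂(gaussianReal b 1) := by
        rw [← zero_add b, ← gaussianReal_map_add_const, lintegral_map hF (by fun_prop), zero_add]
    _ = ∫⁻ x, ENNReal.ofReal (Real.exp (b * x - b ^ 2 / 2)) * F x ∂(gaussianReal 0 1) := by
        rw [gaussianReal_of_var_ne_zero _ one_ne_zero, gaussianReal_of_var_ne_zero _ one_ne_zero,
          lintegral_withDensity_eq_lintegral_mul _ (measurable_gaussianPDF _ _) hF,
          lintegral_withDensity_eq_lintegral_mul _ (measurable_gaussianPDF _ _) (by fun_prop)]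
        simp only [Pi.mul_apply, hdensity, mul_assoc]

section Shift

variable {i : ι} {g : (ι → ℝ) → ℝ}

lemma lintegral_comp_coordShift [DecidableEq ι] (hg : Measurable g)
    (hg_dep : DependsOn g {i}ᶜ) {F : (ι → ℝ) → ENNReal} (hF : Measurable F) :
    ∫⁻ η, F (coordShift i g η) ∂(stdGaussianPi ι)
      = ∫⁻ η, ENNReal.ofReal (shiftDensity i g η) * F η ∂(stdGaussianPi ι) := by
  have hdensity := measurable_shiftDensity (i := i) hg
  refine lintegral_eq_of_lmarginal_eq {i} (hF.comp (measurable_coordShift hg))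
    (hdensity.ennreal_ofReal.mul hF) ?_
  rw [lmarginal_singleton, lmarginal_singleton]
  funext η
  have hg_update (x : ℝ) : g (Function.update η i x) = g η :=
    hg_dep fun j hj => Function.update_of_ne hj _ _
  simp only [coordShift, shiftDensity, hg_update, Function.update_idem, Function.update_self]
  exact lintegral_add_const_gaussianReal (g η) (hF.comp (measurable_update η))

lemma map_coordShift_stdGaussianPi [DecidableEq ι] (hg : Measurable g)
    (hg_dep : DependsOn g {i}ᶜ) :
    (stdGaussianPi ι).map (coordShift i g)
      = (stdGaussianPi ι).withDensity fun η => ENNReal.ofReal (shiftDensity i g η) := by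
  refine Measure.ext_of_lintegral _ fun F hF => ?_
  rw [lintegral_map hF (measurable_coordShift hg), lintegral_comp_coordShift hg hg_dep hF,
    lintegral_withDensity_eq_lintegral_mul _ (measurable_shiftDensity hg).ennreal_ofReal hF]
  rfl

lemma integral_shiftDensity (hg : Measurable g) (hg_dep : DependsOn g {i}ᶜ) :
    ∫ η, shiftDensity i g η ∂(stdGaussianPi ι) = 1 := by
  classical
  have hlintegral := lintegral_comp_coordShift hg hg_dep (F := fun _ => 1) measurable_const
  simp only [mul_one, lintegral_one, measure_univ] at hlintegral
  rw [integral_eq_lintegral_of_nonneg_ae (ae_of_all _ (shiftDensity_nonneg i g))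
    (measurable_shiftDensity hg).aestronglyMeasurable, ← hlintegral, ENNReal.toReal_one]

lemma lintegral_shiftDensity_sq (hg : Measurable g) (hg_dep : DependsOn g {i}ᶜ) :
    ∫⁻ η, ENNReal.ofReal (shiftDensity i g η ^ 2) ∂(stdGaussianPi ι)
      = ∫⁻ η, ENNReal.ofReal (Real.exp (g η ^ 2)) ∂(stdGaussianPi ι) := by
  classical
  have hg_shift (η : ι → ℝ) : g (coordShift i (fun η => 2 * g η) η) = g η :=
    hg_dep fun j hj => Function.update_of_ne hj _ _
  have hshift := lintegral_comp_coordShift (i := i) (hg.const_mul 2)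
    (fun _ _ h => congrArg (2 * ·) (hg_dep h))
    (F := fun η => ENNReal.ofReal (Real.exp (g η ^ 2))) (by fun_prop)
  simp only [hg_shift] at hshift
  rw [hshift]
  simp only [shiftDensity_sq, ENNReal.ofReal_mul' (Real.exp_pos _).le]

lemma integral_shiftDensity_sq (hg : Measurable g) (hg_dep : DependsOn g {i}ᶜ) :
    ∫ η, shiftDensity i g η ^ 2 ∂(stdGaussianPi ι)
      = ∫ η, Real.exp (g η ^ 2) ∂(stdGaussianPi ι) := by
  have hdensity := measurable_shiftDensity (i := i) hg
  rw [integral_eq_lintegral_of_nonneg_ae (ae_of_all _ fun _ => sq_nonneg _) (by fun_prop),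
    integral_eq_lintegral_of_nonneg_ae (ae_of_all _ fun _ => (Real.exp_pos _).le) (by fun_prop),
    lintegral_shiftDensity_sq hg hg_dep]

lemma memLp_shiftDensity (hg : Measurable g) (hg_dep : DependsOn g {i}ᶜ)
    (hg_exp : Integrable (fun η => Real.exp (g η ^ 2)) (stdGaussianPi ι)) :
    MemLp (shiftDensity i g) 2 (stdGaussianPi ι) := by
  have hdensity := measurable_shiftDensity (i := i) hg
  rw [memLp_two_iff_integrable_sq hdensity.aestronglyMeasurable,
    ← lintegral_ofReal_ne_top_iff_integrable (by fun_prop) (ae_of_all _ fun _ => sq_nonneg _),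
    lintegral_shiftDensity_sq hg hg_dep]
  exact hg_exp.lintegral_lt_top.ne

lemma abs_pi_real_sub_pi_map_coordShift_real_le [DecidableEq ι] (hg : Measurable g)
    (hg_dep : DependsOn g {i}ᶜ)
    (hg_exp : Integrable (fun η => Real.exp (g η ^ 2)) (stdGaussianPi ι)) {κ : Type*} [Fintype κ]
    (A : Set (κ → ι → ℝ)) :
    |(Measure.pi fun _ : κ => stdGaussianPi ι).real A
        - (Measure.pi fun _ : κ => (stdGaussianPi ι).map (coordShift i g)).real A|
      ≤ √((∫ η, Real.exp (g η ^ 2) ∂(stdGaussianPi ι)) ^ Fintype.card κ - 1) := by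
  rw [map_coordShift_stdGaussianPi hg hg_dep, ← integral_shiftDensity_sq hg hg_dep]
  exact abs_pi_real_sub_pi_withDensity_real_le (memLp_shiftDensity hg hg_dep hg_exp)
    (shiftDensity_nonneg i g) (integral_shiftDensity hg hg_dep) A

end Shift

lemma gaussianPDFReal_mul_exp_mul_sq (s x : ℝ) :
    gaussianPDFReal 0 1 x * Real.exp (s * x ^ 2)
      = (√(2 * Real.pi))⁻¹ * Real.exp (-(1 / 2 - s) * x ^ 2) := by
  simp only [gaussianPDFReal, NNReal.coe_one, mul_one, sub_zero, mul_assoc, ← Real.exp_add]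
  ring_nf

lemma integrable_exp_mul_sq_gaussianReal {s : ℝ} (hs : s < 1 / 2) :
    Integrable (fun x => Real.exp (s * x ^ 2)) (gaussianReal 0 1) := by
  rw [gaussianReal_of_var_ne_zero _ one_ne_zero,
    integrable_withDensity_iff (measurable_gaussianPDF _ _)
      (ae_of_all _ fun _ => gaussianPDF_lt_top)]
  simp_rw [toReal_gaussianPDF, mul_comm (Real.exp _), gaussianPDFReal_mul_exp_mul_sq]
  exact (integrable_exp_neg_mul_sq (sub_pos.2 hs)).const_mul _

lemma integral_exp_mul_sq_gaussianReal {s : ℝ} (hs : s < 1 / 2) :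
    ∫ x, Real.exp (s * x ^ 2) ∂(gaussianReal 0 1) = √((1 - 2 * s)⁻¹) := by
  simp_rw [integral_gaussianReal_eq_integral_smul one_ne_zero, smul_eq_mul,
    gaussianPDFReal_mul_exp_mul_sq]
  rw [integral_const_mul, integral_gaussian, ← Real.sqrt_inv, ← Real.sqrt_mul (by positivity)]
  congr 1
  have : 1 - 2 * s ≠ 0 := by linarith
  have : 1 / 2 - s ≠ 0 := by linarith
  field_simp

lemma integral_exp_mul_sq_gaussianReal_le {s : ℝ} (hs_nonneg : 0 ≤ s) (hs : s ≤ 1 / 4) :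
    ∫ x, Real.exp (s * x ^ 2) ∂(gaussianReal 0 1) ≤ Real.exp (2 * s) := by
  rw [integral_exp_mul_sq_gaussianReal (by linarith),
    Real.sqrt_le_left (Real.exp_pos _).le, ← Real.exp_nat_mul]
  calc (1 - 2 * s)⁻¹ ≤ 4 * s + 1 := by
        rw [inv_le_iff_one_le_mul₀ (by linarith)]
        nlinarith
    _ ≤ Real.exp (4 * s) := Real.add_one_le_exp _
    _ = Real.exp ((2 : ℕ) * (2 * s)) := by push_cast; ring_nf

lemma coordShift_eq_mulVec [DecidableEq ι] (i j : ι) (b : ℝ) :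
    coordShift i (fun η => b * η j) = fun η => (1 + Matrix.single i j b) *ᵥ η := by
  funext η k
  obtain rfl | hk := eq_or_ne k i
  · simp [coordShift, add_mulVec, Matrix.single_mulVec]
  · simp [coordShift, add_mulVec, Matrix.single_mulVec, hk]

lemma abs_pi_real_sub_pi_map_transvection_real_le [DecidableEq ι] {i j : ι} (hij : i ≠ j) {b : ℝ}
    (hb : b ^ 2 ≤ 1 / 4) {κ : Type*} [Fintype κ] (A : Set (κ → ι → ℝ)) :
    |(Measure.pi fun _ : κ => stdGaussianPi ι).real A
        - (Measure.pi fun _ : κ =>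
            (stdGaussianPi ι).map fun η => transvection i j b *ᵥ η).real A|
      ≤ √(Real.exp (2 * b ^ 2 * Fintype.card κ) - 1) := by
  have hdep : DependsOn (fun η : ι → ℝ => b * η j) {i}ᶜ := fun _ _ h =>
    congrArg (b * ·) (h j hij.symm)
  have heval : MeasurePreserving (Function.eval j) (stdGaussianPi ι) (gaussianReal 0 1) :=
    measurePreserving_eval _ j
  have hexp : Integrable (fun η : ι → ℝ => Real.exp ((b * η j) ^ 2)) (stdGaussianPi ι) := by
    simp_rw [mul_pow]
    exact heval.integrable_comp_of_integrable
      (integrable_exp_mul_sq_gaussianReal (s := b ^ 2) (by linarith))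
  have hintegral : ∫ η, Real.exp ((b * η j) ^ 2) ∂(stdGaussianPi ι) ≤ Real.exp (2 * b ^ 2) := by
    simp_rw [mul_pow]
    rw [integral_comp_eval (μ := fun _ : ι => gaussianReal 0 1)
      (f := fun x : ℝ => Real.exp (b ^ 2 * x ^ 2)) (by fun_prop)]
    exact integral_exp_mul_sq_gaussianReal_le (sq_nonneg b) hb
  rw [transvection, ← coordShift_eq_mulVec]
  refine (abs_pi_real_sub_pi_map_coordShift_real_le (by fun_prop) hdep hexp A).trans ?_
  rw [mul_comm (2 * b ^ 2), Real.exp_nat_mul]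
  gcongr

end StdGaussian

section Anticoncentration

lemma gaussianReal_zero_sq_eq_map_mul (s : ℝ) :
    gaussianReal 0 (s ^ 2).toNNReal = (gaussianReal 0 1).map (s * ·) := by
  rw [gaussianReal_map_const_mul, mul_zero, mul_one, Real.toNNReal_of_nonneg (sq_nonneg s)]

lemma gaussianReal_zero_eq_map_sqrt_mul (v : NNReal) :
    gaussianReal 0 v = (gaussianReal 0 1).map (√v * ·) := by
  rw [← gaussianReal_zero_sq_eq_map_mul, Real.sq_sqrt v.coe_nonneg, Real.toNNReal_coe]

lemma gaussianPDFReal_one_le {x : ℝ} (hx : |x| ≤ 1) :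
    gaussianPDFReal 0 1 1 ≤ gaussianPDFReal 0 1 x := by
  simp only [gaussianPDFReal, NNReal.coe_one, mul_one, sub_zero]
  gcongr _ * Real.exp (-?_ / _)
  rwa [sq_le_sq, abs_one]

lemma mul_min_sqrt_one_le_gaussianReal_Ioc (v : NNReal) :
    ENNReal.ofReal (gaussianPDFReal 0 1 1 * min √v 1) ≤ gaussianReal 0 v (Set.Ioc (-v) 0) := by
  set r := min √(v : ℝ) 1
  have hr_nonneg : 0 ≤ r := by positivity
  have hr_le_one : r ≤ 1 := min_le_right _ _
  have hsubset : Set.Ioc (-r) 0 ⊆ (√v * ·) ⁻¹' Set.Ioc (-(v : ℝ)) 0 := fun z hz => by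
    have hr_le_sqrt : r ≤ √v := min_le_left _ _
    have hsqrt : √(v : ℝ) * √v = v := Real.mul_self_sqrt v.2
    have hsqrt_pos : 0 < √(v : ℝ) := by linarith [hz.1, hz.2]
    exact ⟨by nlinarith [hz.1], mul_nonpos_of_nonneg_of_nonpos hsqrt_pos.le hz.2⟩
  calc ENNReal.ofReal (gaussianPDFReal 0 1 1 * r)
      = ∫⁻ _ in Set.Ioc (-r) 0, ENNReal.ofReal (gaussianPDFReal 0 1 1) := by
        rw [setLIntegral_const, Real.volume_Ioc, sub_neg_eq_add, zero_add,
          ← ENNReal.ofReal_mul (gaussianPDFReal_nonneg _ _ _)]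
    _ ≤ ∫⁻ z in Set.Ioc (-r) 0, gaussianPDF 0 1 z :=
        setLIntegral_mono (measurable_gaussianPDF _ _) fun z hz => ENNReal.ofReal_le_ofReal <|
          gaussianPDFReal_one_le (abs_le.2 ⟨by linarith [hz.1], by linarith [hz.2]⟩)
    _ = gaussianReal 0 1 (Set.Ioc (-r) 0) := (gaussianReal_apply _ one_ne_zero _).symm
    _ ≤ gaussianReal 0 v (Set.Ioc (-v) 0) := by
        rw [gaussianReal_zero_eq_map_sqrt_mul v, Measure.map_apply (by fun_prop) measurableSet_Ioc]
        exact measure_mono hsubset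

/-- The mean of `|Z|` truncated at its standard deviation, for a standard Gaussian `Z`. -/
noncomputable def truncatedAbsMean : ℝ := ∫ z, min |z| 1 ∂(gaussianReal 0 1)

lemma integrable_min_of_nonneg {α : Type*} [MeasurableSpace α] {μ : Measure α} [IsFiniteMeasure μ]
    {f : α → ℝ} (hf : AEStronglyMeasurable f μ) (hf_nonneg : 0 ≤ f) {c : ℝ} (hc : 0 ≤ c) :
    Integrable (fun x => min (f x) c) μ := by
  refine .of_bound (C := c) (hf.inf aestronglyMeasurable_const) (ae_of_all _ fun x => ?_)
  rw [Real.norm_of_nonneg (le_min (hf_nonneg x) hc)]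
  exact min_le_right _ _

lemma truncatedAbsMean_pos : 0 < truncatedAbsMean := by
  have := nullSingletonClass_gaussianReal (μ := 0) (v := 1) one_ne_zero
  have hint : Integrable (fun z : ℝ => min |z| 1) (gaussianReal 0 1) :=
    integrable_min_of_nonneg (by fun_prop) abs_nonneg zero_le_one
  have hsupport : Function.support (fun z : ℝ => min |z| 1) = {0}ᶜ := by
    ext z
    have hmin : min |z| 1 = 0 ↔ z = 0 := by
      rw [← abs_eq_zero]
      grind
    simp [hmin]
  rw [truncatedAbsMean, integral_pos_iff_support_of_nonneg (fun z => by positivity) hint, hsupport,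
    prob_compl_eq_one_sub (measurableSet_singleton _), measure_singleton]
  simp

variable {ι : Type*} [Fintype ι]

lemma dotProduct_self_nonneg_real (w : ι → ℝ) : 0 ≤ w ⬝ᵥ w :=
  Finset.sum_nonneg fun i _ => mul_self_nonneg (w i)

lemma integral_min_abs_dotProduct_stdGaussianPi (w : ι → ℝ) :
    ∫ η, min |w ⬝ᵥ η| √(w ⬝ᵥ w) ∂(stdGaussianPi ι) = truncatedAbsMean * √(w ⬝ᵥ w) := by
  have hscale (z : ℝ) : min |√(w ⬝ᵥ w) * z| √(w ⬝ᵥ w) = min |z| 1 * √(w ⬝ᵥ w) := by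
    rw [abs_mul, abs_of_nonneg (Real.sqrt_nonneg _), min_mul_of_nonneg _ _ (Real.sqrt_nonneg _),
      one_mul, mul_comm]
  calc ∫ η, min |w ⬝ᵥ η| √(w ⬝ᵥ w) ∂(stdGaussianPi ι)
      = ∫ x, min |x| √(w ⬝ᵥ w) ∂(gaussianReal 0 (w ⬝ᵥ w).toNNReal) := by
        rw [← map_dotProduct_stdGaussianPi, integral_map (by fun_prop) (by fun_prop)]
    _ = ∫ z, min |√(w ⬝ᵥ w) * z| √(w ⬝ᵥ w) ∂(gaussianReal 0 1) := by
        rw [gaussianReal_zero_eq_map_sqrt_mul, integral_map (by fun_prop) (by fun_prop),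
          Real.coe_toNNReal _ (dotProduct_self_nonneg_real w)]
    _ = truncatedAbsMean * √(w ⬝ᵥ w) := by
        simp_rw [hscale]
        rw [integral_mul_const, truncatedAbsMean]

open scoped Matrix.Norms.Frobenius

lemma frobenius_norm_sq_eq_sum_dotProduct {κ : Type*} [Fintype κ] (D : Matrix κ ι ℝ) :
    ‖D‖ ^ 2 = ∑ i, D i ⬝ᵥ D i := by
  rw [frobenius_norm_def, ← Real.rpow_natCast, ← Real.rpow_mul (by positivity)]
  simp [dotProduct, sq]

lemma sum_sqrt_mul_min_le {κ : Type*} [Fintype κ] {D : Matrix κ ι ℝ} (hD : ‖D‖ ≤ 1) (η : ι → ℝ) :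
    ∑ i, √(D i ⬝ᵥ D i) * min |D i ⬝ᵥ η| √(D i ⬝ᵥ D i)
      ≤ ‖D‖ * min √((D *ᵥ η) ⬝ᵥ (D *ᵥ η)) 1 := by
  have hsq (i : κ) : √(D i ⬝ᵥ D i) ^ 2 = D i ⬝ᵥ D i := Real.sq_sqrt (dotProduct_self_nonneg_real _)
  have hnorm : ‖D‖ = √(∑ i, √(D i ⬝ᵥ D i) ^ 2) := by
    simp_rw [hsq]
    rw [← frobenius_norm_sq_eq_sum_dotProduct, Real.sqrt_sq (norm_nonneg D)]
  rw [mul_min_of_nonneg _ _ (norm_nonneg D)]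
  refine le_min ?_ ?_
  · calc ∑ i, √(D i ⬝ᵥ D i) * min |D i ⬝ᵥ η| √(D i ⬝ᵥ D i)
        ≤ ∑ i, √(D i ⬝ᵥ D i) * |D i ⬝ᵥ η| := by
          gcongr
          exact min_le_left _ _
      _ ≤ √(∑ i, √(D i ⬝ᵥ D i) ^ 2) * √(∑ i, |D i ⬝ᵥ η| ^ 2) :=
          Real.sum_mul_le_sqrt_mul_sqrt _ _ _
      _ = ‖D‖ * √((D *ᵥ η) ⬝ᵥ (D *ᵥ η)) := by
          rw [← hnorm]
          simp only [sq_abs]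
          simp only [sq, dotProduct, mulVec]
  · calc ∑ i, √(D i ⬝ᵥ D i) * min |D i ⬝ᵥ η| √(D i ⬝ᵥ D i)
        ≤ ∑ i, √(D i ⬝ᵥ D i) * √(D i ⬝ᵥ D i) := by
          gcongr
          exact min_le_right _ _
      _ = ‖D‖ * ‖D‖ := by
          rw [← sq, frobenius_norm_sq_eq_sum_dotProduct]
          simp only [← sq, hsq]
      _ ≤ ‖D‖ * 1 := by gcongr

lemma mul_norm_le_integral_min_sqrt {κ : Type*} [Fintype κ] {D : Matrix κ ι ℝ} (hD : ‖D‖ ≤ 1) :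
    truncatedAbsMean * ‖D‖
      ≤ ∫ η, min √((D *ᵥ η) ⬝ᵥ (D *ᵥ η)) 1 ∂(stdGaussianPi ι) := by
  have hint : Integrable (fun η => min √((D *ᵥ η) ⬝ᵥ (D *ᵥ η)) 1) (stdGaussianPi ι) :=
    integrable_min_of_nonneg (by fun_prop) (fun _ => Real.sqrt_nonneg _) zero_le_one
  have hint_row (i : κ) :
      Integrable (fun η => √(D i ⬝ᵥ D i) * min |D i ⬝ᵥ η| √(D i ⬝ᵥ D i)) (stdGaussianPi ι) :=
    (integrable_min_of_nonneg (by fun_prop) (fun _ => abs_nonneg _)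
      (Real.sqrt_nonneg _)).const_mul _
  have hmul : truncatedAbsMean * ‖D‖ * ‖D‖
      ≤ (∫ η, min √((D *ᵥ η) ⬝ᵥ (D *ᵥ η)) 1 ∂(stdGaussianPi ι)) * ‖D‖ :=
    calc truncatedAbsMean * ‖D‖ * ‖D‖
        = ∑ i, ∫ η, √(D i ⬝ᵥ D i) * min |D i ⬝ᵥ η| √(D i ⬝ᵥ D i) ∂(stdGaussianPi ι) := by
          simp_rw [integral_const_mul, integral_min_abs_dotProduct_stdGaussianPi]
          rw [mul_assoc, ← sq, frobenius_norm_sq_eq_sum_dotProduct, Finset.mul_sum]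
          refine Finset.sum_congr rfl fun i _ => ?_
          rw [mul_left_comm, Real.mul_self_sqrt (dotProduct_self_nonneg_real _)]
      _ ≤ ∫ η, ‖D‖ * min √((D *ᵥ η) ⬝ᵥ (D *ᵥ η)) 1 ∂(stdGaussianPi ι) := by
          rw [← integral_finsetSum _ fun i _ => hint_row i]
          exact integral_mono (integrable_finsetSum _ fun i _ => hint_row i)
            (hint.const_mul _) (sum_sqrt_mul_min_le hD)
      _ = (∫ η, min √((D *ᵥ η) ⬝ᵥ (D *ᵥ η)) 1 ∂(stdGaussianPi ι)) * ‖D‖ := by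
          rw [integral_const_mul, mul_comm]
  obtain hzero | hpos := (norm_nonneg D).eq_or_lt
  · rw [← hzero, mul_zero]
    exact integral_nonneg fun η => by positivity
  · exact le_of_mul_le_mul_right hmul hpos

lemma lmarginal_comp_dotProduct [DecidableEq ι] {s : Finset ι} {w : ι → ℝ} (hw : ∀ i ∉ s, w i = 0)
    {φ : ℝ → ENNReal} (hφ : Measurable φ) (x : ι → ℝ) :
    (∫⋯∫⁻_s, (fun η => φ (w ⬝ᵥ η)) ∂fun _ : ι => gaussianReal 0 1) x
      = ∫⁻ z, φ z ∂(gaussianReal 0 (w ⬝ᵥ w).toNNReal) := by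
  have hrestrict (u : ι → ℝ) : w ⬝ᵥ u = (fun i : s => w i) ⬝ᵥ fun i : s => u i := by
    simp only [dotProduct, Finset.univ_eq_attach]
    rw [Finset.sum_attach s fun i => w i * u i]
    exact (Finset.sum_subset (Finset.subset_univ s) fun i _ hi => by rw [hw i hi, zero_mul]).symm
  have hupdate (y : s → ℝ) : (fun i : s => Function.updateFinset x s y i) = y := by
    funext i
    simp [Function.updateFinset]
  simp only [lmarginal, hrestrict, hupdate]
  rw [← map_dotProduct_stdGaussianPi, lintegral_map hφ (by fun_prop)]

/-- Conditionally on the coordinates in `S`, which determine `V`, the variable `V η ⬝ᵥ η` is a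
centred Gaussian of variance `V η ⬝ᵥ V η`. -/
lemma mul_integral_min_sqrt_le_measureReal {S : Finset ι} {V : (ι → ℝ) → ι → ℝ}
    (hV : Measurable V) (hV_dep : DependsOn V (S : Set ι)) (hV_zero : ∀ η, ∀ i ∈ S, V η i = 0) :
    gaussianPDFReal 0 1 1 * ∫ η, min √(V η ⬝ᵥ V η) 1 ∂(stdGaussianPi ι)
      ≤ (stdGaussianPi ι).real {η | V η ⬝ᵥ η ∈ Set.Ioc (-(V η ⬝ᵥ V η)) 0} := by
  classical
  set E : Set (ι → ℝ) := {η | V η ⬝ᵥ η ∈ Set.Ioc (-(V η ⬝ᵥ V η)) 0}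
  have hVV : Measurable fun η => V η ⬝ᵥ V η := by fun_prop
  have hVη : Measurable fun η => V η ⬝ᵥ η := by fun_prop
  have hE : MeasurableSet E :=
    (measurableSet_lt hVV.neg hVη).inter (measurableSet_le hVη measurable_const)
  have hlintegral : ∫⁻ η, ENNReal.ofReal (gaussianPDFReal 0 1 1 * min √(V η ⬝ᵥ V η) 1)
      ∂(stdGaussianPi ι) ≤ ∫⁻ η, E.indicator 1 η ∂(stdGaussianPi ι) := by
    refine lintegral_le_of_lmarginal_le Sᶜ (by fun_prop) (measurable_one.indicator hE) fun x => ?_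
    have hV_update (y : ↥Sᶜ → ℝ) : V (Function.updateFinset x Sᶜ y) = V x :=
      hV_dep fun i hi => by simp_all [Function.updateFinset]
    have hmarginal := lmarginal_comp_dotProduct (s := Sᶜ) (w := V x)
      (fun i hi => hV_zero x i (by simpa using hi))
      (measurable_one.indicator (measurableSet_Ioc (a := -(V x ⬝ᵥ V x)) (b := 0))) x
    have hIoc := mul_min_sqrt_one_le_gaussianReal_Ioc (V x ⬝ᵥ V x).toNNReal
    rw [Real.coe_toNNReal _ (dotProduct_self_nonneg_real _)] at hIoc
    simp only [lmarginal, hV_update, lintegral_const, measure_univ, mul_one]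
    refine hIoc.trans_eq ?_
    rw [← lintegral_indicator_one measurableSet_Ioc, ← hmarginal]
    simp only [lmarginal, Set.indicator_apply, Pi.one_apply, E, Set.mem_ofPred_eq,
      hV_update]
  rw [lintegral_indicator_one hE, ← ofReal_integral_eq_lintegral_ofReal
    ((integrable_min_of_nonneg (by fun_prop) (fun _ => Real.sqrt_nonneg _) zero_le_one).const_mul _)
    (ae_of_all _ fun η => mul_nonneg (gaussianPDFReal_nonneg _ _ _) (by positivity)),
    ENNReal.ofReal_le_iff_le_toReal (measure_ne_top _ _), integral_const_mul] at hlintegral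
  exact hlintegral

end Anticoncentration

section Assouad

variable {Ω K : Type*} [MeasurableSpace Ω]

lemma measurableSet_apply_ne {est : Ω → K → Bool} (hest : Measurable est) (τ : K → Bool) (k : K) :
    MeasurableSet {ω | est ω k ≠ τ k} :=
  (measurableSet_eq_fun ((measurable_pi_apply k).comp hest) measurable_const).compl

variable [Fintype K]

lemma integral_hammingDist {μ : Measure Ω} [IsFiniteMeasure μ] {est : Ω → K → Bool}
    (hest : Measurable est) (τ : K → Bool) :
    ∫ ω, (hammingDist (est ω) τ : ℝ) ∂μ = ∑ k, μ.real {ω | est ω k ≠ τ k} := by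
  have hsum (ω : Ω) : (hammingDist (est ω) τ : ℝ)
      = ∑ k, {ω | est ω k ≠ τ k}.indicator (fun _ => (1 : ℝ)) ω := by
    simp [hammingDist, Finset.card_filter, Set.indicator_apply]
  simp_rw [hsum]
  rw [integral_finsetSum _ fun k _ =>
    (integrable_const (1 : ℝ)).indicator (measurableSet_apply_ne hest τ k)]
  simp [integral_indicator_const, measurableSet_apply_ne hest τ]

variable [DecidableEq K]

lemma card_mul_le_sum_measureReal_ne {P : (K → Bool) → Measure Ω}
    [∀ τ, IsProbabilityMeasure (P τ)] {t : ℝ} {k : K}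
    (hP : ∀ τ A, MeasurableSet A →
      |(P τ).real A - (P (Function.update τ k (!τ k))).real A| ≤ t)
    {est : Ω → K → Bool} (hest : Measurable est) :
    (Fintype.card (K → Bool) : ℝ) * ((1 - t) / 2) ≤ ∑ τ, (P τ).real {ω | est ω k ≠ τ k} := by
  let flip (τ : K → Bool) : K → Bool := Function.update τ k (!τ k)
  have hflip : Function.Involutive flip := fun τ => by simp [flip]
  have hpair (τ : K → Bool) :
      1 - t ≤ (P τ).real {ω | est ω k ≠ τ k} + (P (flip τ)).real {ω | est ω k ≠ flip τ k} := by
    have hcompl : {ω | est ω k ≠ flip τ k} = {ω | est ω k ≠ τ k}ᶜ := by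
      ext ω
      simp [flip]
    rw [hcompl, probReal_compl_eq_one_sub (measurableSet_apply_ne hest τ k)]
    linarith [(abs_le.1 (hP τ _ (measurableSet_apply_ne hest τ k))).1]
  have hsum_flip : ∑ τ, (P (flip τ)).real {ω | est ω k ≠ flip τ k}
      = ∑ τ, (P τ).real {ω | est ω k ≠ τ k} :=
    Equiv.sum_comp hflip.toPerm fun τ => (P τ).real {ω | est ω k ≠ τ k}
  have hsum := Finset.sum_le_sum fun τ (_ : τ ∈ Finset.univ) => hpair τ
  rw [Finset.sum_add_distrib, hsum_flip] at hsum
  simp only [Finset.sum_const, Finset.card_univ, nsmul_eq_mul] at hsum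
  linarith

theorem exists_card_mul_le_integral_hammingDist {P : (K → Bool) → Measure Ω}
    [∀ τ, IsProbabilityMeasure (P τ)] {t : ℝ}
    (hP : ∀ τ k A, MeasurableSet A →
      |(P τ).real A - (P (Function.update τ k (!τ k))).real A| ≤ t)
    {est : Ω → K → Bool} (hest : Measurable est) :
    ∃ τ, Fintype.card K * ((1 - t) / 2) ≤ ∫ ω, (hammingDist (est ω) τ : ℝ) ∂(P τ) := by
  have hsum : ∑ _τ : K → Bool, (Fintype.card K : ℝ) * ((1 - t) / 2)
      ≤ ∑ τ, ∫ ω, (hammingDist (est ω) τ : ℝ) ∂(P τ) :=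
    calc ∑ _τ : K → Bool, (Fintype.card K : ℝ) * ((1 - t) / 2)
        = ∑ _k : K, (Fintype.card (K → Bool) : ℝ) * ((1 - t) / 2) := by
          simp only [Finset.sum_const, Finset.card_univ, nsmul_eq_mul]
          ring
      _ ≤ ∑ k, ∑ τ, (P τ).real {ω | est ω k ≠ τ k} :=
          Finset.sum_le_sum fun k _ => card_mul_le_sum_measureReal_ne (fun τ => hP τ k) hest
      _ = ∑ τ, ∫ ω, (hammingDist (est ω) τ : ℝ) ∂(P τ) := by
          rw [Finset.sum_comm]
          simp_rw [integral_hammingDist hest]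
  obtain ⟨τ, -, hτ⟩ := Finset.exists_le_of_sum_le Finset.univ_nonempty hsum
  exact ⟨τ, hτ⟩

lemma exists_measurable_selection {T : Type*} [Finite T] [Nonempty T] [MeasurableSpace T]
    {E : T → Set Ω} (hE : ∀ τ, MeasurableSet (E τ)) :
    ∃ est : Ω → T, Measurable est ∧ ∀ τ, ∀ ω ∈ E τ, ω ∈ E (est ω) := by
  classical
  let select (s : T → Prop) : T := if h : ∃ τ, s τ then h.choose else Classical.arbitrary T
  have hselect (s : T → Prop) (τ : T) (hτ : s τ) : s (select s) := by
    have hs : ∃ τ, s τ := ⟨τ, hτ⟩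
    simp only [select, dif_pos hs]
    exact hs.choose_spec
  refine ⟨fun ω => select fun τ => ω ∈ E τ, ?_, fun τ ω hω => hselect (fun τ => ω ∈ E τ) τ hω⟩
  exact (measurable_of_countable select).comp
    (measurable_pi_iff.2 fun τ => measurableSet_setOfPred.1 (hE τ))

/-- Any hypothesis consistent with the data is `r`-close to the truth on the good event, and at
distance at most `card K` otherwise; compare with Assouad's lower bound on its mean distance. -/
theorem card_mul_le_of_hammingDist_le {P : (K → Bool) → Measure Ω}
    [∀ τ, IsProbabilityMeasure (P τ)] {t r δ : ℝ} (hr : 0 ≤ r)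
    (hP : ∀ τ k A, MeasurableSet A →
      |(P τ).real A - (P (Function.update τ k (!τ k))).real A| ≤ t)
    {E : (K → Bool) → Set Ω} (hE : ∀ τ, MeasurableSet (E τ))
    (hPE : ∀ τ, 1 - δ ≤ (P τ).real (E τ))
    (hdist : ∀ τ τ' ω, ω ∈ E τ → ω ∈ E τ' → (hammingDist τ τ' : ℝ) ≤ r) :
    Fintype.card K * ((1 - t) / 2) ≤ r + Fintype.card K * δ := by
  obtain ⟨est, hest, hest_mem⟩ := exists_measurable_selection hE
  obtain ⟨τ, hτ⟩ := exists_card_mul_le_integral_hammingDist hP hest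
  set N : ℝ := (Fintype.card K : ℝ)
  let bad : Ω → ℝ := (E τ)ᶜ.indicator fun _ => N
  have hbad_int : Integrable bad (P τ) := (integrable_const N).indicator (hE τ).compl
  have hdist_le (ω : Ω) : (hammingDist (est ω) τ : ℝ) ≤ r + bad ω := by
    by_cases hω : ω ∈ E τ
    · simpa [bad, hω] using hdist (est ω) τ ω (hest_mem τ ω hω) hω
    · have hcard : (hammingDist (est ω) τ : ℝ) ≤ N :=
        Nat.cast_le.2 hammingDist_le_card_fintype
      simp only [bad, Set.indicator_of_mem (show ω ∈ (E τ)ᶜ from hω)]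
      linarith
  calc N * ((1 - t) / 2) ≤ ∫ ω, (hammingDist (est ω) τ : ℝ) ∂(P τ) := hτ
    _ ≤ ∫ ω, (r + bad ω) ∂(P τ) :=
        integral_mono_of_nonneg (ae_of_all _ fun ω => Nat.cast_nonneg _)
          ((integrable_const r).add hbad_int) (ae_of_all _ hdist_le)
    _ = r + N * (1 - (P τ).real (E τ)) := by
        rw [integral_add (integrable_const r) hbad_int,
          integral_indicator_const _ (hE τ).compl, probReal_compl_eq_one_sub (hE τ)]
        simp [mul_comm]
    _ ≤ r + N * δ := by
        gcongr
        linarith [hPE τ]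

theorem card_mul_le_of_dTV_le {X : Type*} [MeasurableSpace X] {P : (K → Bool) → Measure Ω}
    [∀ τ, IsProbabilityMeasure (P τ)] {M : (K → Bool) → Measure X}
    [∀ τ, IsProbabilityMeasure (M τ)] {t r δ ρ : ℝ} (hr : 0 ≤ r)
    (hP : ∀ τ k A, MeasurableSet A →
      |(P τ).real A - (P (Function.update τ k (!τ k))).real A| ≤ t)
    (hM : ∀ τ τ', ∃ T, MeasurableSet T ∧
      (r < hammingDist τ τ' → 2 * ρ < (M τ').real T - (M τ).real T))
    {Q : Ω → Measure X} (hQ : Measurable Q) [∀ ω, IsProbabilityMeasure (Q ω)]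
    (hPQ : ∀ τ, 1 - δ ≤ (P τ).real {ω | dTV (M τ) (Q ω) ≤ ρ}) :
    Fintype.card K * ((1 - t) / 2) ≤ r + Fintype.card K * δ := by
  choose T hT hM using hM
  -- `ω ↦ dTV (M τ) (Q ω)` need not be measurable, so only finitely many sets are tested.
  let E (τ : K → Bool) : Set Ω :=
    {ω | ∀ τ₁ τ₂, |(M τ).real (T τ₁ τ₂) - (Q ω).real (T τ₁ τ₂)| ≤ ρ}
  have hE (τ : K → Bool) : MeasurableSet (E τ) := by
    have hQT (τ₁ τ₂ : K → Bool) : Measurable fun ω => (Q ω).real (T τ₁ τ₂) :=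
      ((Measure.measurable_coe (hT τ₁ τ₂)).comp hQ).ennreal_toReal
    simp only [E, Set.ofPred_forall]
    exact .iInter fun τ₁ => .iInter fun τ₂ =>
      measurableSet_le (measurable_const.sub (hQT τ₁ τ₂)).abs measurable_const
  refine card_mul_le_of_hammingDist_le hr hP hE (fun τ => (hPQ τ).trans ?_) fun τ τ' ω hτ hτ' => ?_
  · exact measureReal_mono fun ω hω τ₁ τ₂ => (abs_measureReal_sub_le_dTV _ _ _).trans hω
  · by_contra! hlt
    have hsep := hM τ τ' hlt
    linarith [(abs_le.1 (hτ τ τ')).1, (abs_le.1 (hτ' τ τ')).2]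

end Assouad

section Bipartite

variable {ι : Type*} [DecidableEq ι] {S : Finset ι} {B C : Matrix ι ι ℝ}

/-- The parent sets of the complete bipartite DAG with set of sources `S` and set of sinks `Sᶜ`. -/
def bipartiteParents (S : Finset ι) (i : ι) : Finset ι := if i ∈ S then ∅ else S

/-- `B` is a coefficient matrix on the complete bipartite DAG with set of sources `S`. -/
def IsBipartite (S : Finset ι) (B : Matrix ι ι ℝ) : Prop :=
  ∀ i j, j ∉ bipartiteParents S i → B i j = 0

lemma mem_bipartiteParents {i j : ι} : j ∈ bipartiteParents S i ↔ i ∉ S ∧ j ∈ S := by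
  by_cases hi : i ∈ S <;> simp [bipartiteParents, hi]

namespace IsBipartite

lemma apply_eq_zero_of_mem (hB : IsBipartite S B) {i : ι} (hi : i ∈ S) (j : ι) : B i j = 0 :=
  hB i j fun h => (mem_bipartiteParents.1 h).1 hi

lemma apply_eq_zero_of_notMem (hB : IsBipartite S B) (i : ι) {j : ι} (hj : j ∉ S) : B i j = 0 :=
  hB i j fun h => hj (mem_bipartiteParents.1 h).2

lemma sub (hB : IsBipartite S B) (hC : IsBipartite S C) : IsBipartite S (B - C) :=
  fun i j h => by rw [Matrix.sub_apply, hB i j h, hC i j h, sub_zero]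

lemma single {i j : ι} (hi : i ∉ S) (hj : j ∈ S) (b : ℝ) : IsBipartite S (Matrix.single i j b) := by
  intro i' j' h
  rw [Matrix.single_apply, if_neg]
  rintro ⟨rfl, rfl⟩
  exact h (mem_bipartiteParents.2 ⟨hi, hj⟩)

variable [Fintype ι]

lemma mul_eq_zero (hB : IsBipartite S B) (hC : IsBipartite S C) : B * C = 0 := by
  ext i k
  rw [Matrix.mul_apply, Matrix.zero_apply]
  refine Finset.sum_eq_zero fun j _ => ?_
  by_cases hj : j ∈ S
  · rw [hC.apply_eq_zero_of_mem hj, mul_zero]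
  · rw [hB.apply_eq_zero_of_notMem i hj, zero_mul]

lemma one_sub_mul_one_add (hB : IsBipartite S B) (hC : IsBipartite S C) :
    (1 - B) * (1 + C) = 1 + (C - B) := by
  rw [sub_mul, one_mul, mul_add, mul_one, hB.mul_eq_zero hC, add_zero, add_sub_assoc]

lemma inv_one_sub (hB : IsBipartite S B) : (1 - B)⁻¹ = 1 + B :=
  inv_eq_right_inv (by rw [hB.one_sub_mul_one_add hB, sub_self, add_zero])

lemma dependsOn_mulVec (hB : IsBipartite S B) :
    DependsOn (fun η : ι → ℝ => B *ᵥ η) (S : Set ι) := by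
  intro x y hxy
  ext i
  simp only [mulVec, dotProduct]
  refine Finset.sum_congr rfl fun j _ => ?_
  by_cases hj : j ∈ S
  · rw [hxy j hj]
  · rw [hB.apply_eq_zero_of_notMem i hj, zero_mul, zero_mul]

lemma mulVec_apply_eq_zero (hB : IsBipartite S B) (η : ι → ℝ) {i : ι} (hi : i ∈ S) :
    (B *ᵥ η) i = 0 := by
  simp only [mulVec, dotProduct, hB.apply_eq_zero_of_mem hi, zero_mul, Finset.sum_const_zero]

end IsBipartite

variable [Fintype ι]

/-- The law of the unit-noise Gaussian Bayesian network with coefficient matrix `B`, for `B` of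
square zero: then `1 + B` is the inverse of `1 - B`. -/
noncomputable def shearedGaussian (B : Matrix ι ι ℝ) : Measure (ι → ℝ) :=
  (stdGaussianPi ι).map fun η => (1 + B) *ᵥ η

instance (B : Matrix ι ι ℝ) : IsProbabilityMeasure (shearedGaussian B) :=
  Measure.isProbabilityMeasure_map (by fun_prop)

open scoped Matrix.Norms.Frobenius

lemma IsBipartite.mul_norm_le_measureReal (hB : IsBipartite S B) (hB_norm : ‖B‖ ≤ 1) :
    gaussianPDFReal 0 1 1 * truncatedAbsMean * ‖B‖ ≤ (stdGaussianPi ι).real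
      {η | (B *ᵥ η) ⬝ᵥ η ∈ Set.Ioc (-((B *ᵥ η) ⬝ᵥ (B *ᵥ η))) 0} :=
  calc gaussianPDFReal 0 1 1 * truncatedAbsMean * ‖B‖
      ≤ gaussianPDFReal 0 1 1
          * ∫ η, min √((B *ᵥ η) ⬝ᵥ (B *ᵥ η)) 1 ∂stdGaussianPi ι := by
        rw [mul_assoc]
        exact mul_le_mul_of_nonneg_left (mul_norm_le_integral_min_sqrt hB_norm)
          (gaussianPDFReal_nonneg _ _ _)
    _ ≤ _ := mul_integral_min_sqrt_le_measureReal (by fun_prop) hB.dependsOn_mulVec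
        fun η _ hi => hB.mulVec_apply_eq_zero η hi

lemma exists_measurableSet_mul_norm_sub_le_shearedGaussian (hB : IsBipartite S B)
    (hC : IsBipartite S C) (hBC : ‖C - B‖ ≤ 1) :
    ∃ T : Set (ι → ℝ), MeasurableSet T ∧
      gaussianPDFReal 0 1 1 * truncatedAbsMean * ‖C - B‖
        ≤ (shearedGaussian C).real T - (shearedGaussian B).real T := by
  set D := C - B
  have hD : IsBipartite S D := hC.sub hB
  -- At `x = (1 + B) z` the log-likelihood ratio of the two laws is `Dz ⬝ z - (Dz ⬝ Dz) / 2`.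
  let T : Set (ι → ℝ) := {x | 0 < (D *ᵥ (1 - B) *ᵥ x) ⬝ᵥ ((1 - B) *ᵥ x)}
  have hT : MeasurableSet T := measurableSet_lt measurable_const (by fun_prop)
  have hpreimage_B : (fun η => (1 + B) *ᵥ η) ⁻¹' T = {η | 0 < (D *ᵥ η) ⬝ᵥ η} := by
    have hinv (η : ι → ℝ) : (1 - B) *ᵥ (1 + B) *ᵥ η = η := by
      rw [mulVec_mulVec, hB.one_sub_mul_one_add hB, sub_self, add_zero, one_mulVec]
    simp only [T, Set.preimage_ofPred_eq, hinv]
  have hpreimage_C : (fun η => (1 + C) *ᵥ η) ⁻¹' T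
      = {η | 0 < (D *ᵥ η) ⬝ᵥ η + (D *ᵥ η) ⬝ᵥ (D *ᵥ η)} := by
    have hshift (η : ι → ℝ) : (1 - B) *ᵥ (1 + C) *ᵥ η = η + D *ᵥ η := by
      rw [mulVec_mulVec, hB.one_sub_mul_one_add hC, add_mulVec, one_mulVec]
    have hfix (η : ι → ℝ) : D *ᵥ (η + D *ᵥ η) = D *ᵥ η := by
      rw [mulVec_add, mulVec_mulVec, hD.mul_eq_zero hD, zero_mulVec, add_zero]
    simp only [T, Set.preimage_ofPred_eq, hshift, hfix, dotProduct_add]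
  have hdiff : {η | (D *ᵥ η) ⬝ᵥ η ∈ Set.Ioc (-((D *ᵥ η) ⬝ᵥ (D *ᵥ η))) 0}
      = {η | 0 < (D *ᵥ η) ⬝ᵥ η + (D *ᵥ η) ⬝ᵥ (D *ᵥ η)} \ {η | 0 < (D *ᵥ η) ⬝ᵥ η} := by
    ext η
    simp only [Set.mem_ofPred_eq, Set.mem_Ioc, Set.mem_sdiff, not_lt, neg_lt_iff_pos_add]
  have hsubset : {η | 0 < (D *ᵥ η) ⬝ᵥ η}
      ⊆ {η | 0 < (D *ᵥ η) ⬝ᵥ η + (D *ᵥ η) ⬝ᵥ (D *ᵥ η)} :=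
    fun _ hη => add_pos_of_pos_of_nonneg hη (dotProduct_self_nonneg_real _)
  refine ⟨T, hT, ?_⟩
  rw [shearedGaussian, shearedGaussian, map_measureReal_apply (by fun_prop) hT,
    map_measureReal_apply (by fun_prop) hT, hpreimage_B, hpreimage_C,
    ← measureReal_sdiff hsubset (measurableSet_lt measurable_const (by fun_prop)), ← hdiff]
  exact hD.mul_norm_le_measureReal hBC

lemma abs_pi_shearedGaussian_real_sub_add_single_le {κ : Type*} [Fintype κ] (hB : IsBipartite S B)
    {i j : ι} (hi : i ∉ S) (hj : j ∈ S) {b : ℝ} (hb : b ^ 2 ≤ 1 / 4)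
    {A : Set (κ → ι → ℝ)} (hA : MeasurableSet A) :
    |(Measure.pi fun _ : κ => shearedGaussian B).real A
        - (Measure.pi fun _ : κ => shearedGaussian (B + Matrix.single i j b)).real A|
      ≤ √(Real.exp (2 * b ^ 2 * Fintype.card κ) - 1) := by
  have hij : i ≠ j := fun h => hi (h ▸ hj)
  have hfactor : 1 + (B + Matrix.single i j b) = (1 + B) * transvection i j b := by
    rw [transvection, mul_add, mul_one, add_mul, one_mul,
      hB.mul_eq_zero (IsBipartite.single hi hj b), add_zero, add_assoc]
  have hmap : shearedGaussian (B + Matrix.single i j b)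
      = ((stdGaussianPi ι).map fun η => transvection i j b *ᵥ η).map fun x => (1 + B) *ᵥ x := by
    rw [shearedGaussian, Measure.map_map (by fun_prop) (by fun_prop)]
    simp only [hfactor, ← mulVec_mulVec, Function.comp_def]
  rw [hmap, shearedGaussian]
  have : IsProbabilityMeasure ((stdGaussianPi ι).map fun η => transvection i j b *ᵥ η) :=
    Measure.isProbabilityMeasure_map (by fun_prop)
  exact abs_pi_map_real_sub_le
    (fun A _ => abs_pi_real_sub_pi_map_transvection_real_le hij hb A) (by fun_prop) hA

end Bipartite

section Cube

variable {ι ι' : Type*} [DecidableEq ι] [DecidableEq ι'] {E : Finset (ι × ι')}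

/-- The vertex `τ` of the cube of matrices with entries in `{0, a}` at the positions in `E`, and
zero entries elsewhere. -/
def cubeMatrix (a : ℝ) (τ : E → Bool) : Matrix ι ι' ℝ :=
  Matrix.of fun i j => if h : (i, j) ∈ E then (if τ ⟨(i, j), h⟩ then a else 0) else 0

lemma cubeMatrix_apply_coe (a : ℝ) (τ : E → Bool) (k : E) :
    cubeMatrix a τ k.1.1 k.1.2 = if τ k then a else 0 := by
  simp [cubeMatrix]

lemma cubeMatrix_apply_of_notMem (a : ℝ) (τ : E → Bool) {i : ι} {j : ι'} (h : (i, j) ∉ E) :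
    cubeMatrix a τ i j = 0 := by
  simp [cubeMatrix, h]

lemma cubeMatrix_update_not (a : ℝ) (τ : E → Bool) (k : E) :
    cubeMatrix a (Function.update τ k (!τ k))
      = cubeMatrix a τ + Matrix.single k.1.1 k.1.2 (if τ k then -a else a) := by
  ext i j
  rw [Matrix.add_apply, Matrix.single_apply]
  by_cases hij : (i, j) ∈ E
  · obtain ⟨l, rfl, rfl⟩ : ∃ l : E, l.1.1 = i ∧ l.1.2 = j := ⟨⟨(i, j), hij⟩, rfl, rfl⟩
    simp only [cubeMatrix_apply_coe, ← Prod.ext_iff, ← Subtype.ext_iff]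
    rcases eq_or_ne k l with rfl | hkl
    · cases hk : τ k <;> simp
    · simp [hkl, Function.update_of_ne hkl.symm]
  · have hk : ¬(k.1.1 = i ∧ k.1.2 = j) := by
      rintro ⟨rfl, rfl⟩
      exact hij k.2
    rw [cubeMatrix_apply_of_notMem _ _ hij, cubeMatrix_apply_of_notMem _ _ hij, if_neg hk, add_zero]

variable [Fintype ι] [Fintype ι']

open scoped Matrix.Norms.Frobenius

lemma norm_cubeMatrix_sub_sq (a : ℝ) (τ τ' : E → Bool) :
    ‖cubeMatrix a τ' - cubeMatrix a τ‖ ^ 2 = a ^ 2 * hammingDist τ τ' := by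
  have hentry (k : E) : (cubeMatrix a τ' - cubeMatrix a τ) k.1.1 k.1.2 ^ 2
      = if τ k ≠ τ' k then a ^ 2 else 0 := by
    rw [Matrix.sub_apply, cubeMatrix_apply_coe, cubeMatrix_apply_coe]
    cases τ k <;> cases τ' k <;> simp
  calc ‖cubeMatrix a τ' - cubeMatrix a τ‖ ^ 2
      = ∑ q : ι × ι', (cubeMatrix a τ' - cubeMatrix a τ) q.1 q.2 ^ 2 := by
        rw [frobenius_norm_sq_eq_sum_dotProduct, Fintype.sum_prod_type]
        simp only [dotProduct, sq]
    _ = ∑ q ∈ E, (cubeMatrix a τ' - cubeMatrix a τ) q.1 q.2 ^ 2 := by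
        refine (Finset.sum_subset (Finset.subset_univ E) fun q _ hq => ?_).symm
        rw [Matrix.sub_apply, cubeMatrix_apply_of_notMem _ _ hq,
          cubeMatrix_apply_of_notMem _ _ hq, sub_zero, zero_pow two_ne_zero]
    _ = ∑ k : E, (cubeMatrix a τ' - cubeMatrix a τ) k.1.1 k.1.2 ^ 2 :=
        (Finset.sum_coe_sort E fun q => (cubeMatrix a τ' - cubeMatrix a τ) q.1 q.2 ^ 2).symm
    _ = a ^ 2 * hammingDist τ τ' := by
        simp_rw [hentry]
        rw [← Finset.sum_filter, Finset.sum_const, nsmul_eq_mul, mul_comm]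
        rfl

end Cube

section GaussianBN

variable {n : ℕ}

instance (B : Matrix (Fin n) (Fin n) ℝ) (σ : Fin n → ℝ) :
    IsProbabilityMeasure (gaussianBN B σ) :=
  Measure.isProbabilityMeasure_map (by fun_prop)

lemma gaussianBN_one_eq_shearedGaussian {S : Finset (Fin n)} {B : Matrix (Fin n) (Fin n) ℝ}
    (hB : IsBipartite S B) : gaussianBN B (fun _ => 1) = shearedGaussian B := by
  rw [gaussianBN, shearedGaussian, hB.inv_one_sub, one_pow, Real.toNNReal_one]

lemma gaussianBN_eq_map_stdGaussianPi (B : Matrix (Fin n) (Fin n) ℝ) (σ : Fin n → ℝ) :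
    gaussianBN B σ = (stdGaussianPi (Fin n)).map fun η => (1 - B)⁻¹ *ᵥ (σ * η) := by
  have (i : Fin n) : IsProbabilityMeasure ((gaussianReal 0 1).map (σ i * ·)) :=
    Measure.isProbabilityMeasure_map (by fun_prop)
  simp_rw [gaussianBN, gaussianReal_zero_sq_eq_map_mul]
  rw [← Measure.pi_map_pi fun i => by fun_prop, Measure.map_map (by fun_prop) (by fun_prop)]
  rfl

lemma measurable_measure_map {α β γ : Type*} [MeasurableSpace α] [MeasurableSpace β]
    [MeasurableSpace γ] (μ : Measure β) [SFinite μ] {F : α → β → γ}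
    (hF : Measurable (Function.uncurry F)) : Measurable fun a => μ.map (F a) := by
  refine Measure.measurable_of_measurable_coe _ fun s hs => ?_
  simp_rw [fun a => Measure.map_apply (μ := μ) (hF.of_uncurry_left (x := a)) hs]
  exact measurable_measure_prodMk_left (hF hs)

lemma measurable_gaussianBN : Measurable fun p : (Fin n → Fin n → ℝ) × (Fin n → ℝ) =>
    gaussianBN (Matrix.of p.1) p.2 := by
  simp_rw [gaussianBN_eq_map_stdGaussianPi]
  refine measurable_measure_map _ ?_
  have hsub : Continuous fun q : ((Fin n → Fin n → ℝ) × (Fin n → ℝ)) × (Fin n → ℝ) =>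
      1 - Matrix.of q.1.1 := by
    fun_prop
  have hadj : Continuous fun q : ((Fin n → Fin n → ℝ) × (Fin n → ℝ)) × (Fin n → ℝ) =>
      (1 - Matrix.of q.1.1).adjugate *ᵥ (q.1.2 * q.2) :=
    hsub.matrix_adjugate.matrix_mulVec (by fun_prop)
  simp only [Function.uncurry_def, Matrix.inv_def, Ring.inverse_eq_inv', smul_mulVec]
  exact hsub.matrix_det.measurable.inv.smul hadj.measurable

end GaussianBN

section LowerBound

variable {ι : Type*} [Fintype ι] [DecidableEq ι] {S : Finset ι} {a ε : ℝ}

/-- The universal constant of the lower bound. The first term makes `sampleComplexityConst * ε` less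
than half the total variation distance of two cube vertices at Hamming distance at least a twelfth
of the dimension, the second makes neighbouring vertices `1 / 7`-close. -/
noncomputable def sampleComplexityConst : ℝ :=
  min (gaussianPDFReal 0 1 1 * truncatedAbsMean / 14) (1 / 100)

lemma sampleComplexityConst_pos : 0 < sampleComplexityConst := by
  have := gaussianPDFReal_pos 0 1 1 one_ne_zero
  have := truncatedAbsMean_pos
  exact lt_min (by positivity) (by norm_num)

lemma isBipartite_cubeMatrix (a : ℝ) (τ : ↥(Sᶜ ×ˢ S) → Bool) : IsBipartite S (cubeMatrix a τ) :=
  fun i j hij => cubeMatrix_apply_of_notMem a τ fun h => hij <| mem_bipartiteParents.2 <| by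
    simpa using h

open scoped Matrix.Norms.Frobenius in
lemma exists_measurableSet_lt_shearedGaussian_cubeMatrix (hε : 0 < ε) (hε_le : ε ≤ 1)
    (ha : a ^ 2 * (4 * Fintype.card ↥(Sᶜ ×ˢ S)) = ε ^ 2) (τ τ' : ↥(Sᶜ ×ˢ S) → Bool) :
    ∃ T, MeasurableSet T ∧ ((Fintype.card ↥(Sᶜ ×ˢ S) / 12 : ℝ) < hammingDist τ τ' →
      2 * (sampleComplexityConst * ε)
        < (shearedGaussian (cubeMatrix a τ')).real T
          - (shearedGaussian (cubeMatrix a τ)).real T) := by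
  set N : ℝ := (Fintype.card ↥(Sᶜ ×ˢ S) : ℝ)
  have hnorm_sq := norm_cubeMatrix_sub_sq a τ τ'
  have hdist_le : (hammingDist τ τ' : ℝ) ≤ N := Nat.cast_le.2 hammingDist_le_card_fintype
  have hnorm_le : ‖cubeMatrix a τ' - cubeMatrix a τ‖ ≤ 1 := by
    rw [← sq_le_one_iff₀ (norm_nonneg _), hnorm_sq]
    nlinarith [mul_le_mul_of_nonneg_left hdist_le (sq_nonneg a)]
  obtain ⟨T, hT, hT_le⟩ := exists_measurableSet_mul_norm_sub_le_shearedGaussian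
    (isBipartite_cubeMatrix a τ) (isBipartite_cubeMatrix a τ') hnorm_le
  refine ⟨T, hT, fun hdist => lt_of_lt_of_le ?_ hT_le⟩
  have hlt_norm : ε / 7 < ‖cubeMatrix a τ' - cubeMatrix a τ‖ := by
    have ha_pos : 0 < a ^ 2 := (sq_nonneg a).lt_of_ne fun h => by
      rw [← h, zero_mul] at ha
      exact (pow_pos hε 2).ne ha
    refine lt_of_pow_lt_pow_left₀ 2 (norm_nonneg _) ?_
    rw [hnorm_sq]
    nlinarith [mul_lt_mul_of_pos_left hdist ha_pos, pow_pos hε 2]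
  have hconst : 14 * sampleComplexityConst ≤ gaussianPDFReal 0 1 1 * truncatedAbsMean := by
    linarith [min_le_left (gaussianPDFReal 0 1 1 * truncatedAbsMean / 14) (1 / 100),
      sampleComplexityConst.eq_def]
  nlinarith [sampleComplexityConst_pos]

lemma abs_pi_shearedGaussian_cubeMatrix_real_sub_update_le {κ : Type*} [Fintype κ]
    (ha : a ^ 2 ≤ 1 / 4) (hκ : 2 * a ^ 2 * Fintype.card κ ≤ 1 / 200) (τ : ↥(Sᶜ ×ˢ S) → Bool)
    (k : ↥(Sᶜ ×ˢ S)) {A : Set (κ → ι → ℝ)} (hA : MeasurableSet A) :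
    |(Measure.pi fun _ : κ => shearedGaussian (cubeMatrix a τ)).real A
        - (Measure.pi fun _ : κ =>
            shearedGaussian (cubeMatrix a (Function.update τ k (!τ k)))).real A| ≤ 1 / 7 := by
  have hk : k.1.1 ∉ S ∧ k.1.2 ∈ S := by simpa using Finset.mem_product.1 k.2
  have hsq : (if τ k then -a else a) ^ 2 = a ^ 2 := by split_ifs <;> ring
  have hexp : Real.exp (2 * a ^ 2 * Fintype.card κ) ≤ 200 / 199 := by
    refine (Real.exp_le_exp.2 hκ).trans ?_
    have hexp := Real.exp_bound_div_one_sub_of_interval (x := 1 / 200) (by norm_num) (by norm_num)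
    norm_num at hexp ⊢
    exact hexp
  rw [cubeMatrix_update_not]
  calc _ ≤ √(Real.exp (2 * (if τ k then -a else a) ^ 2 * Fintype.card κ) - 1) :=
        abs_pi_shearedGaussian_real_sub_add_single_le (isBipartite_cubeMatrix a τ) hk.1 hk.2
          (by rwa [hsq]) hA
    _ ≤ 1 / 7 := by
        rw [hsq]
        exact Real.sqrt_le_iff.2 ⟨by norm_num, by linarith⟩

theorem mul_card_mul_card_compl_div_sq_le {κ : Type*} [Fintype κ] (hε : 0 < ε) (hε_le : ε ≤ 1)
    {Q : (κ → ι → ℝ) → Measure (ι → ℝ)} (hQ : Measurable Q) [∀ ω, IsProbabilityMeasure (Q ω)]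
    (hQ_acc : ∀ B, IsBipartite S B → 2 / 3 ≤ (Measure.pi fun _ : κ => shearedGaussian B).real
      {ω | dTV (shearedGaussian B) (Q ω) ≤ sampleComplexityConst * ε}) :
    sampleComplexityConst * (S.card * Sᶜ.card) / ε ^ 2 ≤ Fintype.card κ := by
  set N : ℝ := (Fintype.card ↥(Sᶜ ×ˢ S) : ℝ) with hN
  have hcard : (S.card * Sᶜ.card : ℝ) = N := by
    rw [hN, Fintype.card_coe, Finset.card_product, Nat.cast_mul, mul_comm]
  rw [hcard]
  by_contra! hlt
  have hN_pos : 0 < N := by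
    have hN_nonneg : 0 ≤ N := Nat.cast_nonneg _
    refine hN_nonneg.lt_of_ne fun h => ?_
    rw [← h, mul_zero, zero_div] at hlt
    exact (Nat.cast_nonneg _).not_gt hlt
  have hN_one : 1 ≤ N := Nat.one_le_cast.2 (Nat.cast_pos.1 hN_pos)
  let a : ℝ := ε / (2 * √N)
  have ha : a ^ 2 * (4 * N) = ε ^ 2 := by
    simp only [a, div_pow, mul_pow, Real.sq_sqrt hN_pos.le]
    field_simp
    norm_num
  have ha_le : a ^ 2 ≤ 1 / 4 := by nlinarith [sq_nonneg a]
  have hκ : 2 * a ^ 2 * Fintype.card κ ≤ 1 / 200 := by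
    rw [lt_div_iff₀ (by positivity), ← ha] at hlt
    have hconst : sampleComplexityConst ≤ 1 / 100 := min_le_right _ _
    have hlt' : N * (4 * (a ^ 2 * Fintype.card κ)) < N * sampleComplexityConst := by linarith
    linarith [lt_of_mul_lt_mul_left hlt' hN_pos.le]
  have hassouad := card_mul_le_of_dTV_le (r := N / 12) (δ := 1 / 3) (by positivity)
    (fun τ k _ hA => abs_pi_shearedGaussian_cubeMatrix_real_sub_update_le ha_le hκ τ k hA)
    (exists_measurableSet_lt_shearedGaussian_cubeMatrix hε hε_le ha) hQ
    fun τ => (by norm_num : (1 - 1 / 3 : ℝ) = 2 / 3) ▸ hQ_acc _ (isBipartite_cubeMatrix a τ)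
  linarith

end LowerBound

theorem stmt_17_general : ∃ c : ℝ, 0 < c ∧
    ∀ (ε : ℝ), 0 < ε → ε ≤ 1 → ∀ (n d : ℕ), d ≤ n →
    ∃ π : Fin n → Finset (Fin n),
      (∀ i, ∀ j ∈ π i, j < i) ∧ (∀ i, (π i).card ≤ d) ∧
      ∀ (m : ℕ) (Q : (Fin m → Fin n → ℝ) → Measure (Fin n → ℝ)),
        Measurable Q →
        (∀ ω, IsProbabilityMeasure (Q ω)) →
        (∀ B : Matrix (Fin n) (Fin n) ℝ, (∀ i j, j ∉ π i → B i j = 0) →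
          (2 / 3 : ENNReal) ≤ (Measure.pi fun _ : Fin m => gaussianBN B (fun _ => 1))
            {ω | dTV (gaussianBN B (fun _ => 1)) (Q ω) ≤ c * ε}) →
        c * ((d : ℝ) * ((n : ℝ) - (d : ℝ))) / ε ^ 2 ≤ (m : ℝ) := by
  refine ⟨sampleComplexityConst, sampleComplexityConst_pos, fun ε hε hε_le n d hdn => ?_⟩
  let S : Finset (Fin n) := {i | (i : ℕ) < d}
  have hS : S.card = d := by rw [Fin.card_filter_val_lt, min_eq_right hdn]
  refine ⟨bipartiteParents S, fun i j hij => ?_, fun i => ?_, fun m Q hQ _ hQ_acc => ?_⟩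
  · rw [mem_bipartiteParents] at hij
    simp only [S, Finset.mem_filter_univ] at hij
    omega
  · exact hS ▸ Finset.card_le_card fun j hj => (mem_bipartiteParents.1 hj).2
  · have hS_compl : (Sᶜ.card : ℝ) = n - d := by
      rw [Finset.card_compl, hS, Fintype.card_fin, Nat.cast_sub hdn]
    rw [← hS_compl, ← hS, ← Fintype.card_fin m]
    refine mul_card_mul_card_compl_div_sq_le hε hε_le hQ fun B hB => ?_
    rw [← gaussianBN_one_eq_shearedGaussian hB]
    simpa [measureReal_def] using ENNReal.toReal_mono (measure_ne_top _ _) (hQ_acc B hB)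

/-- Theorem 5.2, sample-complexity lower bound for learning Gaussian Bayesian networks:
there is a universal constant `c > 0` such that for every `ε ∈ (0,1)` and `1 ≤ d ≤ n/2`
there is a DAG `G` on `n` nodes of in-degree at most `d` (given by parent sets `π`)
such that any measurable estimator mapping `m` i.i.d. samples of a Gaussian Bayesian
network `P` on `G` to a Gaussian Bayesian network `Q` on `G` with
`Pr(d_TV(P,Q) ≤ c·ε) ≥ 2/3` for every such `P` must satisfy `m ≥ c·d(n−d)/ε²`. -/
theorem stmt_17 : ∃ c : ℝ, 0 < c ∧
    ∀ (ε : ℝ), 0 < ε → ε < 1 → ∀ (n d : ℕ), 1 ≤ d → 2 * d ≤ n →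
    ∃ π : Fin n → Finset (Fin n),
      (∀ i, ∀ j ∈ π i, j < i) ∧ (∀ i, (π i).card ≤ d) ∧
      ∀ (m : ℕ)
        (f : (Fin m → Fin n → ℝ) → (Fin n → Fin n → ℝ) × (Fin n → ℝ)),
        Measurable f →
        (∀ ω i j, j ∉ π i → (f ω).1 i j = 0) →
        (∀ ω i, 0 < (f ω).2 i) →
        (∀ (B : Matrix (Fin n) (Fin n) ℝ) (σ : Fin n → ℝ),
          (∀ i j, j ∉ π i → B i j = 0) → (∀ i, 0 < σ i) →
          (2 / 3 : ENNReal) ≤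
            (Measure.pi fun _ : Fin m => gaussianBN B σ)
              {ω | dTV (gaussianBN B σ) (gaussianBN (Matrix.of (f ω).1) (f ω).2) ≤ c * ε}) →
        c * ((d : ℝ) * ((n : ℝ) - (d : ℝ))) / ε ^ 2 ≤ (m : ℝ) := by
  obtain ⟨c, hc, hlower⟩ := stmt_17_general
  refine ⟨c, hc, fun ε hε hε_lt n d _ hdn => ?_⟩
  obtain ⟨π, hπ_lt, hπ_card, hm⟩ := hlower ε hε hε_lt.le n d (by omega)
  refine ⟨π, hπ_lt, hπ_card, fun m f hf _ _ hacc => ?_⟩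
  exact hm m (fun ω => gaussianBN (Matrix.of (f ω).1) (f ω).2) (measurable_gaussianBN.comp hf)
    (fun _ => inferInstance) fun B hB => hacc B (fun _ => 1) hB fun _ => one_pos
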